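/- arXiv:2104.10711 — 4 statements merged into one kernel-verified Lean document; each statement's English description precedes it below -/
import Mathlib

section
/- Let H be a separable real Hilbert space and let (S_t)_{t ≥ 0} be a family of continuous linear operators on H such that S_0 = id_H, S_{s+t} = S_s ∘ S_t for all s, t ≥ 0, ‖S_t x‖_H ≤ ‖x‖_H for all t ≥ 0 and x ∈ H, and for each x ∈ H the map t ↦ S_t x is continuous on [0,∞) (i.e. (S_t) is a C₀-semigroup of contractions). Then there exist a separable real Hilbert space ℋ, a family (U_t)_{t ∈ ℝ} of surjective linear isometries (unitary operators) of ℋ with U_0 = id_ℋ, U_{s+t} = U_s ∘ U_t for all s, t ∈ ℝ, and t ↦ U_t x continuous on ℝ for each x ∈ ℋ, and a linear isometry ℓ : H → ℋ, such that ℓ* ∘ U_t ∘ ℓ = S_t for all t ≥ 0, where ℓ* denotes the Hilbert-space adjoint of ℓ (so π := ℓ* is the orthogonal projection of ℋ onto H). -/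
/-- A unitary dilation of a family `S` of operators on a real Hilbert space `H`:
a separable real Hilbert space `carrier`, a strongly continuous one-parameter group
of unitary operators `U` on `carrier`, and an isometric embedding `embed : H → carrier`
such that `embed* ∘ U t ∘ embed = S t` for all `t ≥ 0`. -/
structure UnitaryDilation (H : Type) [NormedAddCommGroup H] [InnerProductSpace ℝ H]
    [CompleteSpace H] (S : ℝ → H →L[ℝ] H) where
  carrier : Type
  [instNormed : NormedAddCommGroup carrier]
  [instInner : InnerProductSpace ℝ carrier]
  [instComplete : CompleteSpace carrier]
  [instSep : TopologicalSpace.SeparableSpace carrier]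
  U : ℝ → carrier →L[ℝ] carrier
  U_zero : U 0 = 1
  U_add : ∀ s t : ℝ, U (s + t) = (U s).comp (U t)
  U_isometry : ∀ (t : ℝ) (x : carrier), ‖U t x‖ = ‖x‖
  U_surjective : ∀ t : ℝ, Function.Surjective (U t)
  U_continuous : ∀ x : carrier, Continuous fun t : ℝ => U t x
  embed : H →L[ℝ] carrier
  embed_isometry : ∀ x : H, ‖embed x‖ = ‖x‖
  dilation : ∀ t : ℝ, 0 ≤ t →
    (ContinuousLinearMap.adjoint embed).comp ((U t).comp embed) = S t

noncomputable section
open RKHS InnerProductSpace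
namespace Nagy
variable {H : Type} [NormedAddCommGroup H] [InnerProductSpace ℝ H] [CompleteSpace H]

def T (S : ℝ → H →L[ℝ] H) (r : ℝ) : H →L[ℝ] H :=
  if 0 ≤ r then S r else ContinuousLinearMap.adjoint (S (-r))

def K (S : ℝ → H →L[ℝ] H) : Matrix ℝ ℝ (H →L[ℝ] H) := .of fun x y => T S (y - x)

lemma T_neg {S : ℝ → H →L[ℝ] H} (hS0 : S 0 = 1) (r : ℝ) :
    ContinuousLinearMap.adjoint (T S r) = T S (-r) := by
  unfold T
  rcases lt_trichotomy r 0 with h | h | h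
  · rw [if_neg (by linarith), if_pos (by linarith)]; simp
  · subst h; simp [hS0]
    exact star_one (H →L[ℝ] H)
  · rw [if_pos h.le, if_neg (by linarith)]; simp

lemma K_herm {S : ℝ → H →L[ℝ] H} (hS0 : S 0 = 1) : (K S).IsHermitian := by
  ext x y v
  simp only [Matrix.conjTranspose_apply, K, Matrix.of_apply, ContinuousLinearMap.star_eq_adjoint]
  rw [T_neg hS0, neg_sub]

lemma T_inner_symm {S : ℝ → H →L[ℝ] H} (hS0 : S 0 = 1) (r : ℝ) (v w : H) :
    ⟪T S (-r) v, w⟫_ℝ = ⟪T S r w, v⟫_ℝ := by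
  rw [← T_neg hS0, ContinuousLinearMap.adjoint_inner_left, real_inner_comm]

lemma T_diag {S : ℝ → H →L[ℝ] H} (hS0 : S 0 = 1) (r : ℝ) (v : H) :
    ⟪T S r v, v⟫_ℝ = ⟪S |r| v, v⟫_ℝ := by
  rcases le_total 0 r with h | h
  · rw [abs_of_nonneg h, T, if_pos h]
  · rw [abs_of_nonpos h, ← neg_neg r, T_inner_symm hS0, T, if_pos (by linarith)]; simp

lemma pos_aux {S : ℝ → H →L[ℝ] H} (hS0 : S 0 = 1)
    (hSadd : ∀ s t : ℝ, 0 ≤ s → 0 ≤ t → S (s + t) = (S s).comp (S t))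
    (hScontr : ∀ t : ℝ, 0 ≤ t → ∀ x : H, ‖S t x‖ ≤ ‖x‖) (v : ℝ → H) (s : Finset ℝ) :
    ∀ b : ℝ, (∀ x ∈ s, b ≤ x) →
    ‖∑ x ∈ s, S (x - b) (v x)‖ ^ 2 ≤ ∑ x ∈ s, ∑ y ∈ s, ⟪T S (x - y) (v x), v y⟫_ℝ := by
  classical
  induction s using Finset.induction_on_min with
  | empty => simp
  | insert a s ha ih =>
    intro b hb
    have hab : b ≤ a := hb a (by simp)
    have has : a ∉ s := fun h => lt_irrefl _ (ha a h)
    have h1 : ∑ x ∈ insert a s, S (x - b) (v x) =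
        S (a - b) (∑ x ∈ insert a s, S (x - a) (v x)) := by
      rw [map_sum]
      refine Finset.sum_congr rfl fun x hx => ?_
      have hax : a ≤ x := by
        rcases Finset.mem_insert.1 hx with h | h
        · exact h.ge
        · exact (ha x h).le
      rw [← ContinuousLinearMap.comp_apply, ← hSadd _ _ (by linarith) (by linarith)]
      congr 2; ring
    have h2 := hScontr (a - b) (by linarith) (∑ x ∈ insert a s, S (x - a) (v x))
    rw [← h1] at h2
    refine (pow_le_pow_left₀ (norm_nonneg _) h2 2).trans ?_
    have ih' := ih a (fun x hx => (ha x hx).le)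
    rw [Finset.sum_insert has, Finset.sum_insert has, Finset.sum_insert has]
    simp_rw [Finset.sum_insert has]
    rw [Finset.sum_add_distrib, norm_add_sq_real]
    have h3 : ∑ x ∈ s, ⟪T S (x - a) (v x), v a⟫_ℝ = ⟪v a, ∑ x ∈ s, S (x - a) (v x)⟫_ℝ := by
      rw [inner_sum]
      refine Finset.sum_congr rfl fun x hx => ?_
      rw [T, if_pos (by linarith [ha x hx]), real_inner_comm]
    have h4 : ∑ x ∈ s, ⟪T S (a - x) (v a), v x⟫_ℝ = ⟪v a, ∑ x ∈ s, S (x - a) (v x)⟫_ℝ := by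
      rw [← h3]
      refine Finset.sum_congr rfl fun x hx => ?_
      rw [← T_inner_symm hS0, neg_sub]
    rw [h3, h4]
    simp only [sub_self, hS0, T, le_refl, if_true, ContinuousLinearMap.one_apply,
      real_inner_self_eq_norm_sq] at ih' ⊢
    linarith

lemma K_pos {S : ℝ → H →L[ℝ] H} (hS0 : S 0 = 1)
    (hSadd : ∀ s t : ℝ, 0 ≤ s → 0 ≤ t → S (s + t) = (S s).comp (S t))
    (hScontr : ∀ t : ℝ, 0 ≤ t → ∀ x : H, ‖S t x‖ ≤ ‖x‖) : (K S).PosSemidef := by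
  have h := (RKHS.posSemidef_tfae (K := K S)).out 0 2
  rw [h]
  refine ⟨K_herm hS0, fun vv => ?_⟩
  obtain ⟨b, hb⟩ := vv.support.finite_toSet.bddBelow
  have := pos_aux hS0 hSadd hScontr vv vv.support b (fun x hx => hb hx)
  exact (sq_nonneg _).trans this

variable {S : ℝ → H →L[ℝ] H} [Fact (K S).PosSemidef]

lemma inner_def (f g : H₀ (K S)) :
    ⟪f, g⟫_ℝ = f.sum fun p z ↦ g.sum fun q w ↦ z * w * ⟪T S (p.1 - q.1) p.2, q.2⟫_ℝ := rfl

def u (t : ℝ) : H₀ (K S) →ₗᵢ[ℝ] H₀ (K S) where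
  toLinearMap := Finsupp.lmapDomain ℝ ℝ (fun p => (p.1 + t, p.2))
  norm_map' f := by
    rw [← sq_eq_sq₀ (norm_nonneg _) (norm_nonneg _), ← real_inner_self_eq_norm_sq,
      ← real_inner_self_eq_norm_sq, inner_def, inner_def]
    simp only [Finsupp.lmapDomain_apply]
    rw [Finsupp.sum_mapDomain_index]
    · refine Finsupp.sum_congr fun p _ => ?_
      rw [Finsupp.sum_mapDomain_index]
      · simp
      · simp
      · intros; ring
    · simp
    · intros; simp [add_mul]

lemma u_single (t : ℝ) (y : ℝ) (v : H) (c : ℝ) :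
    u (S := S) t (Finsupp.single (y, v) c) = Finsupp.single (y + t, v) c := by
  simp [u]

lemma kerFun_eq (y : ℝ) (v : H) :
    kerFun (OfKernel (K S)) y v = ((Finsupp.single (y, v) 1 : H₀ (K S)) : OfKernel (K S)) := by
  refine ext_inner_right ℝ fun f => ?_
  simp [kerFun, coeCLM]

def U (t : ℝ) : OfKernel (K S) →L[ℝ] OfKernel (K S) :=
  (u (S := S) t).toContinuousLinearMap.completion

lemma U_coe (t : ℝ) (f : H₀ (K S)) :
    U t (f : OfKernel (K S)) = ((u t f : H₀ (K S)) : OfKernel (K S)) :=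
  ContinuousLinearMap.completion_apply_coe _ f

lemma U_kerFun (t y : ℝ) (v : H) :
    U t (kerFun (OfKernel (K S)) y v) = kerFun (OfKernel (K S)) (y + t) v := by
  rw [kerFun_eq, kerFun_eq, U_coe, u_single]

lemma U_zero' : U (S := S) 0 = 1 := by
  ext1 x
  induction x using UniformSpace.Completion.induction_on with
  | hp => exact isClosed_eq (by fun_prop) (by fun_prop)
  | ih f =>
    rw [U_coe]
    congr 1
    change Finsupp.mapDomain _ f = f
    simp only [add_zero]
    exact Finsupp.mapDomain_id

lemma U_add' (s t : ℝ) : U (S := S) (s + t) = (U s).comp (U t) := by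
  ext1 x
  induction x using UniformSpace.Completion.induction_on with
  | hp => exact isClosed_eq (by fun_prop) (by fun_prop)
  | ih f =>
    rw [ContinuousLinearMap.comp_apply, U_coe, U_coe, U_coe]
    congr 1
    change Finsupp.mapDomain _ f = Finsupp.mapDomain _ (Finsupp.mapDomain _ f)
    rw [← Finsupp.mapDomain_comp]
    congr 1
    funext p
    ext <;> simp; ring

lemma U_iso (t : ℝ) (x : OfKernel (K S)) : ‖U t x‖ = ‖x‖ := by
  induction x using UniformSpace.Completion.induction_on with
  | hp => exact isClosed_eq (by fun_prop) (by fun_prop)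
  | ih f =>
    rw [U_coe, UniformSpace.Completion.norm_coe, UniformSpace.Completion.norm_coe]
    exact (u t).norm_map f

lemma inner_ker (x y : ℝ) (v w : H) :
    ⟪kerFun (OfKernel (K S)) y v, kerFun (OfKernel (K S)) x w⟫_ℝ = ⟪T S (y - x) v, w⟫_ℝ := by
  rw [← kernel_inner, OfKernel.kernel_ofKernel]; rfl

lemma norm_ker (hS0 : S 0 = 1) (x : ℝ) (v : H) : ‖kerFun (OfKernel (K S)) x v‖ = ‖v‖ := by
  rw [← sq_eq_sq₀ (norm_nonneg _) (norm_nonneg _), ← real_inner_self_eq_norm_sq,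
      ← real_inner_self_eq_norm_sq, inner_ker, T_diag hS0]
  simp [hS0]

lemma ker_cont (hS0 : S 0 = 1)
    (hScont : ∀ x : H, ContinuousOn (fun t : ℝ => S t x) (Set.Ici (0 : ℝ))) (v : H) :
    Continuous fun t : ℝ => kerFun (OfKernel (K S)) t v := by
  rw [continuous_iff_continuousAt]
  intro s
  rw [ContinuousAt, tendsto_iff_norm_sub_tendsto_zero]
  have h1 : Continuous fun t : ℝ => S |t - s| v :=
    (hScont v).comp_continuous (by fun_prop) (fun t => Set.mem_Ici.2 (abs_nonneg _))
  have h2 : ∀ t, ‖kerFun (OfKernel (K S)) t v - kerFun (OfKernel (K S)) s v‖ =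
      √(2 * ‖v‖ ^ 2 - 2 * ⟪S |t - s| v, v⟫_ℝ) := by
    intro t
    rw [← Real.sqrt_sq (norm_nonneg (_ - _)), norm_sub_sq_real, norm_ker hS0, norm_ker hS0,
      inner_ker, T_diag hS0]
    congr 1; ring
  simp_rw [h2]
  have h3 : Continuous fun t : ℝ => √(2 * ‖v‖ ^ 2 - 2 * ⟪S |t - s| v, v⟫_ℝ) :=
    (continuous_const.sub (continuous_const.mul (h1.inner continuous_const))).sqrt
  have h4 := h3.tendsto s
  simpa [hS0] using h4

lemma U_cont (hS0 : S 0 = 1)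
    (hScont : ∀ x : H, ContinuousOn (fun t : ℝ => S t x) (Set.Ici (0 : ℝ)))
    (x : OfKernel (K S)) : Continuous fun t : ℝ => U t x := by
  have hspan : ∀ x ∈ Submodule.span ℝ {kerFun (OfKernel (K S)) x v | (x) (v)},
      Continuous fun t : ℝ => U t x := by
    intro x hx
    induction hx using Submodule.span_induction with
    | mem x hx =>
      obtain ⟨y, v, rfl⟩ := hx
      simp_rw [U_kerFun]
      exact (ker_cont hS0 hScont v).comp (by fun_prop)
    | zero => simpa using continuous_const
    | add x y _ _ hx hy => simp only [map_add]; exact hx.add hy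
    | smul c x _ hx => simp only [map_smul]; exact hx.const_smul c
  refine continuous_of_uniform_approx_of_continuous fun W hW => ?_
  obtain ⟨ε, hε, hW⟩ := Metric.mem_uniformity_dist.1 hW
  have hx : x ∈ closure (Submodule.span ℝ {kerFun (OfKernel (K S)) x v | (x) (v)} :
      Set (OfKernel (K S))) := by
    rw [← Submodule.topologicalClosure_coe, kerFun_dense]; trivial
  obtain ⟨y, hy, hxy⟩ := Metric.mem_closure_iff.1 hx ε hε
  refine ⟨_, hspan y hy, fun t => hW ?_⟩
  rw [dist_eq_norm, ← map_sub, U_iso, ← dist_eq_norm]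
  exact hxy

lemma sep [TopologicalSpace.SeparableSpace H] (hS0 : S 0 = 1)
    (hScont : ∀ x : H, ContinuousOn (fun t : ℝ => S t x) (Set.Ici (0 : ℝ))) :
    TopologicalSpace.SeparableSpace (OfKernel (K S)) := by
  have h1 : Continuous fun p : H × ℝ => kerFun (OfKernel (K S)) p.2 p.1 := by
    refine continuous_prod_of_continuous_lipschitzWith _ 1 (fun v => ker_cont hS0 hScont v) ?_
    intro t
    refine LipschitzWith.of_dist_le_mul fun v w => ?_
    simp only [dist_eq_norm]
    rw [← map_sub, norm_ker hS0]; simp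
  have h2 := (TopologicalSpace.isSeparable_range h1).span (R := ℝ)
  have h3 := h2.closure
  have h4 : Set.range (fun p : H × ℝ => kerFun (OfKernel (K S)) p.2 p.1) =
      {kerFun (OfKernel (K S)) x v | (x) (v)} := by
    ext z
    constructor
    · rintro ⟨p, rfl⟩; exact ⟨_, _, rfl⟩
    · rintro ⟨x, v, rfl⟩; exact ⟨(v, x), rfl⟩
  rw [h4, ← Submodule.topologicalClosure_coe, kerFun_dense] at h3
  exact TopologicalSpace.isSeparable_univ_iff.1 h3

end Nagy
end

/-- Dilation theorem of Sz.-Nagy: every `C₀`-semigroup of contractions on a separable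
real Hilbert space admits a dilation to a unitary `C₀`-group on a larger separable
Hilbert space. -/
theorem nagy_dilation_of_contraction_semigroup
    (H : Type) [NormedAddCommGroup H] [InnerProductSpace ℝ H] [CompleteSpace H]
    [TopologicalSpace.SeparableSpace H]
    (S : ℝ → H →L[ℝ] H)
    (hS0 : S 0 = 1)
    (hSadd : ∀ s t : ℝ, 0 ≤ s → 0 ≤ t → S (s + t) = (S s).comp (S t))
    (hScontr : ∀ t : ℝ, 0 ≤ t → ∀ x : H, ‖S t x‖ ≤ ‖x‖)
    (hScont : ∀ x : H, ContinuousOn (fun t : ℝ => S t x) (Set.Ici (0 : ℝ))) :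
    Nonempty (UnitaryDilation H S) := by
  have : Fact (Nagy.K S).PosSemidef := ⟨Nagy.K_pos hS0 hSadd hScontr⟩
  have := Nagy.sep hS0 hScont
  exact ⟨{
    carrier := RKHS.OfKernel (Nagy.K S)
    U := Nagy.U
    U_zero := Nagy.U_zero'
    U_add := Nagy.U_add'
    U_isometry := Nagy.U_iso
    U_surjective := fun t x => ⟨Nagy.U (-t) x, by
      rw [← ContinuousLinearMap.comp_apply, ← Nagy.U_add', add_neg_cancel, Nagy.U_zero']; rfl⟩
    U_continuous := Nagy.U_cont hS0 hScont
    embed := RKHS.kerFun (RKHS.OfKernel (Nagy.K S)) 0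
    embed_isometry := Nagy.norm_ker hS0 0
    dilation := by
      intro t ht
      ext1 v
      refine ext_inner_right ℝ fun w => ?_
      rw [ContinuousLinearMap.comp_apply, ContinuousLinearMap.comp_apply,
        ContinuousLinearMap.adjoint_inner_left, Nagy.U_kerFun, Nagy.inner_ker]
      simp [Nagy.T, ht] }⟩
end

section
/- Let U, H and ℋ be real Hilbert spaces with U separable, ℓ : H → ℋ a linear isometry with adjoint π := ℓ*, and (U_t)_{t ∈ ℝ} a one-parameter group of unitary operators on ℋ. Fix T > 0, a set Ω, an orthonormal basis (e_i)_{i ∈ I} of U, maps α : [0,T] × H × Ω → H and σ : [0,T] × H × Ω → L(U,H), a function f : [0,T] × Ω → [0,∞), and a monotone nondecreasing function τ : [0,∞) → [0,∞). Define a(t,v,ω) := (U_t)*( ℓ( α(t, π(U_t v), ω) ) ) and b(t,v,ω) := (U_t)* ∘ ℓ ∘ σ(t, π(U_t v), ω). Suppose that for all x, y ∈ H and all (t,ω): 2⟨α(t,x,ω) − α(t,y,ω), x − y⟩_H + ∑_{i ∈ I} ‖(σ(t,x,ω) − σ(t,y,ω)) e_i‖_H² ≤ (f(t,ω) + τ(‖y‖_H))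 ‖x − y‖_H². Then for all u, v ∈ ℋ and all (t,ω): 2⟨a(t,u,ω) − a(t,v,ω), u − v⟩_ℋ + ∑_{i ∈ I} ‖(b(t,u,ω) − b(t,v,ω)) e_i‖_ℋ² ≤ (f(t,ω) + τ(‖v‖_ℋ)) ‖u − v‖_ℋ². -/
open scoped ENNReal RealInnerProductSpace

/-- Transfer of the local monotonicity condition (H2') from the coefficients `(α, σ)`
on `H` to the transferred coefficients `a(t,v,ω) = (U_t)* (ℓ (α(t, π (U_t v), ω)))` and
`b(t,v,ω) = (U_t)* ∘ ℓ ∘ σ(t, π (U_t v), ω)` on `𝓗`, where `π = ℓ*` and the squared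
Hilbert–Schmidt norm is computed as `∑' i, ‖· (e i)‖² ∈ [0,∞]` for an orthonormal
basis `e` of the separable Hilbert space `E`. -/
theorem local_monotonicity_transfer
    {E H 𝓗 : Type*}
    [NormedAddCommGroup E] [InnerProductSpace ℝ E] [CompleteSpace E]
    [TopologicalSpace.SeparableSpace E]
    [NormedAddCommGroup H] [InnerProductSpace ℝ H] [CompleteSpace H]
    [NormedAddCommGroup 𝓗] [InnerProductSpace ℝ 𝓗] [CompleteSpace 𝓗]
    (ℓ : H →L[ℝ] 𝓗) (hℓ : ∀ x : H, ‖ℓ x‖ = ‖x‖)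
    (U : ℝ → 𝓗 →L[ℝ] 𝓗)
    (hU0 : U 0 = 1)
    (hUadd : ∀ s t : ℝ, U (s + t) = (U s).comp (U t))
    (hUiso : ∀ (t : ℝ) (x : 𝓗), ‖U t x‖ = ‖x‖)
    (hUsurj : ∀ t : ℝ, Function.Surjective (U t))
    (T : ℝ) (hT : 0 < T) (Ω : Type*)
    {ι : Type*} (e : HilbertBasis ι ℝ E)
    (α : ℝ → H → Ω → H) (σ : ℝ → H → Ω → (E →L[ℝ] H))
    (f : ℝ → Ω → ℝ) (hf : ∀ t ω, 0 ≤ f t ω)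
    (τ : ℝ → ℝ) (hτ0 : ∀ r, 0 ≤ r → 0 ≤ τ r) (hτmono : MonotoneOn τ (Set.Ici (0 : ℝ)))
    (a : ℝ → 𝓗 → Ω → 𝓗)
    (ha : ∀ (t : ℝ) (v : 𝓗) (ω : Ω),
      a t v ω = (ContinuousLinearMap.adjoint (U t))
        (ℓ (α t ((ContinuousLinearMap.adjoint ℓ) (U t v)) ω)))
    (b : ℝ → 𝓗 → Ω → (E →L[ℝ] 𝓗))
    (hb : ∀ (t : ℝ) (v : 𝓗) (ω : Ω),
      b t v ω = ((ContinuousLinearMap.adjoint (U t)).comp ℓ).comp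
        (σ t ((ContinuousLinearMap.adjoint ℓ) (U t v)) ω))
    (hmono : ∀ (x y : H), ∀ t ∈ Set.Icc (0 : ℝ) T, ∀ ω : Ω,
      ((2 * ⟪α t x ω - α t y ω, x - y⟫ : ℝ) : EReal) +
          (∑' i, ((‖(σ t x ω - σ t y ω) (e i)‖₊ : ℝ≥0∞) ^ 2) : ℝ≥0∞) ≤
        (((f t ω + τ ‖y‖) * ‖x - y‖ ^ 2 : ℝ) : EReal)) :
    ∀ (u v : 𝓗), ∀ t ∈ Set.Icc (0 : ℝ) T, ∀ ω : Ω,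
      ((2 * ⟪a t u ω - a t v ω, u - v⟫ : ℝ) : EReal) +
          (∑' i, ((‖(b t u ω - b t v ω) (e i)‖₊ : ℝ≥0∞) ^ 2) : ℝ≥0∞) ≤
        (((f t ω + τ ‖v‖) * ‖u - v‖ ^ 2 : ℝ) : EReal) := by
  intro u v t ht ω
  have key : ∀ w : 𝓗, ‖(ContinuousLinearMap.adjoint (U t)) w‖ = ‖w‖ := by
    intro w
    obtain ⟨z, rfl⟩ := hUsurj t w
    have h1 := (ContinuousLinearMap.norm_map_iff_adjoint_comp_self (U t)).1 (hUiso t)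
    have h2 : (ContinuousLinearMap.adjoint (U t)) (U t z) = z := by
      have := congrArg (fun A : 𝓗 →L[ℝ] 𝓗 => A z) h1
      simpa using this
    rw [h2, hUiso]
  have hπ : ∀ w : 𝓗, ‖(ContinuousLinearMap.adjoint ℓ) w‖ ≤ ‖w‖ := by
    intro w
    have h1 : ‖ContinuousLinearMap.adjoint ℓ‖ ≤ 1 := by
      rw [LinearIsometryEquiv.norm_map]
      exact ContinuousLinearMap.opNorm_le_bound _ zero_le_one (fun x => by rw [hℓ, one_mul])
    simpa using ContinuousLinearMap.le_of_opNorm_le _ h1 w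
  have hm := hmono ((ContinuousLinearMap.adjoint ℓ) (U t u))
    ((ContinuousLinearMap.adjoint ℓ) (U t v)) t ht ω
  have hin : ⟪a t u ω - a t v ω, u - v⟫ =
      ⟪α t ((ContinuousLinearMap.adjoint ℓ) (U t u)) ω -
        α t ((ContinuousLinearMap.adjoint ℓ) (U t v)) ω,
        (ContinuousLinearMap.adjoint ℓ) (U t u) - (ContinuousLinearMap.adjoint ℓ) (U t v)⟫ := by
    rw [ha, ha, ← map_sub, ← map_sub, ContinuousLinearMap.adjoint_inner_left, ← map_sub,
      ContinuousLinearMap.adjoint_inner_right, map_sub (U t)]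
  have hn : ∀ i, ‖(b t u ω - b t v ω) (e i)‖₊ =
      ‖(σ t ((ContinuousLinearMap.adjoint ℓ) (U t u)) ω -
        σ t ((ContinuousLinearMap.adjoint ℓ) (U t v)) ω) (e i)‖₊ := by
    intro i
    apply NNReal.eq
    simp only [coe_nnnorm]
    rw [hb, hb, ← ContinuousLinearMap.comp_sub, ContinuousLinearMap.comp_apply,
      ContinuousLinearMap.comp_apply, key, hℓ]
  simp only [hn, hin]
  refine hm.trans (EReal.coe_le_coe_iff.2 ?_)
  have h1 : ‖(ContinuousLinearMap.adjoint ℓ) (U t v)‖ ≤ ‖v‖ := (hπ _).trans (hUiso t v).le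
  have h2 : ‖(ContinuousLinearMap.adjoint ℓ) (U t u) - (ContinuousLinearMap.adjoint ℓ) (U t v)‖
      ≤ ‖u - v‖ := by
    rw [← map_sub, ← map_sub]
    exact (hπ _).trans (hUiso t _).le
  have h3 := hτmono (norm_nonneg _ : _ ∈ Set.Ici (0:ℝ)) (norm_nonneg v : _ ∈ Set.Ici (0:ℝ)) h1
  have h4 := hτ0 _ (norm_nonneg v)
  have h5 := hf t ω
  exact mul_le_mul (by linarith) (pow_le_pow_left₀ (norm_nonneg _) h2 2) (by positivity)
    (by linarith)
end

section
/- Let U, H and ℋ be real Hilbert spaces with U separable, ℓ : H → ℋ a linear isometry with adjoint π := ℓ*, and (U_t)_{t ∈ ℝ} a one-parameter group of unitary operators on ℋ. Fix T > 0, a set Ω, an orthonormal basis (e_i)_{i ∈ I} of U, maps α : [0,T] × H × Ω → H and σ : [0,T] × H × Ω → L(U,H), a function f : [0,T] × Ω → [0,∞), and constants C₀, θ ∈ ℝ with C₀ ≥ θ. Define a(t,v,ω) := (U_t)*( ℓ( α(t, π(U_t v), ω) ) ) and b(t,v,ω) := (U_t)* ∘ ℓ ∘ σ(t, π(U_t v),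 ω). Suppose that for all y ∈ H and all (t,ω): 2⟨α(t,y,ω), y⟩_H + ∑_{i ∈ I} ‖σ(t,y,ω) e_i‖_H² ≤ (C₀ − θ) ‖y‖_H² + f(t,ω). Then for all v ∈ ℋ and all (t,ω): 2⟨a(t,v,ω), v⟩_ℋ + ∑_{i ∈ I} ‖b(t,v,ω) e_i‖_ℋ² ≤ (C₀ − θ) ‖v‖_ℋ² + f(t,ω). -/
open scoped ENNReal RealInnerProductSpace

/-- Transfer of the coercivity condition (H3) from the coefficients `(α, σ)` on `H` to
the transferred coefficients `a(t,v,ω) = (U_t)* (ℓ (α(t, π (U_t v), ω)))` and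
`b(t,v,ω) = (U_t)* ∘ ℓ ∘ σ(t, π (U_t v), ω)` on `𝓗`, where `π = ℓ*` and the squared
Hilbert–Schmidt norm is computed as `∑' i, ‖· (e i)‖² ∈ [0,∞]` for an orthonormal
basis `e` of the separable Hilbert space `E`. -/
theorem coercivity_transfer
    {E H 𝓗 : Type*}
    [NormedAddCommGroup E] [InnerProductSpace ℝ E] [CompleteSpace E]
    [TopologicalSpace.SeparableSpace E]
    [NormedAddCommGroup H] [InnerProductSpace ℝ H] [CompleteSpace H]
    [NormedAddCommGroup 𝓗] [InnerProductSpace ℝ 𝓗] [CompleteSpace 𝓗]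
    (ℓ : H →L[ℝ] 𝓗) (hℓ : ∀ x : H, ‖ℓ x‖ = ‖x‖)
    (U : ℝ → 𝓗 →L[ℝ] 𝓗)
    (hU0 : U 0 = 1)
    (hUadd : ∀ s t : ℝ, U (s + t) = (U s).comp (U t))
    (hUiso : ∀ (t : ℝ) (x : 𝓗), ‖U t x‖ = ‖x‖)
    (hUsurj : ∀ t : ℝ, Function.Surjective (U t))
    (T : ℝ) (hT : 0 < T) (Ω : Type*)
    {ι : Type*} (e : HilbertBasis ι ℝ E)
    (α : ℝ → H → Ω → H) (σ : ℝ → H → Ω → (E →L[ℝ] H))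
    (f : ℝ → Ω → ℝ) (hf : ∀ t ω, 0 ≤ f t ω)
    (C₀ θ : ℝ) (hC₀θ : θ ≤ C₀)
    (a : ℝ → 𝓗 → Ω → 𝓗)
    (ha : ∀ (t : ℝ) (v : 𝓗) (ω : Ω),
      a t v ω = (ContinuousLinearMap.adjoint (U t))
        (ℓ (α t ((ContinuousLinearMap.adjoint ℓ) (U t v)) ω)))
    (b : ℝ → 𝓗 → Ω → (E →L[ℝ] 𝓗))
    (hb : ∀ (t : ℝ) (v : 𝓗) (ω : Ω),
      b t v ω = ((ContinuousLinearMap.adjoint (U t)).comp ℓ).comp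
        (σ t ((ContinuousLinearMap.adjoint ℓ) (U t v)) ω))
    (hcoer : ∀ (y : H), ∀ t ∈ Set.Icc (0 : ℝ) T, ∀ ω : Ω,
      ((2 * ⟪α t y ω, y⟫ : ℝ) : EReal) +
          (∑' i, ((‖(σ t y ω) (e i)‖₊ : ℝ≥0∞) ^ 2) : ℝ≥0∞) ≤
        (((C₀ - θ) * ‖y‖ ^ 2 + f t ω : ℝ) : EReal)) :
    ∀ (v : 𝓗), ∀ t ∈ Set.Icc (0 : ℝ) T, ∀ ω : Ω,
      ((2 * ⟪a t v ω, v⟫ : ℝ) : EReal) +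
          (∑' i, ((‖(b t v ω) (e i)‖₊ : ℝ≥0∞) ^ 2) : ℝ≥0∞) ≤
        (((C₀ - θ) * ‖v‖ ^ 2 + f t ω : ℝ) : EReal) := by
  intro v t ht ω
  have hUU : ∀ x, (ContinuousLinearMap.adjoint (U t)) (U t x) = x := by
    have h := (ContinuousLinearMap.norm_map_iff_adjoint_comp_self (U t)).1 (hUiso t)
    intro x
    exact DFunLike.congr_fun h x
  have hUn : ∀ w, ‖(ContinuousLinearMap.adjoint (U t)) w‖ = ‖w‖ := by
    intro w
    obtain ⟨x, rfl⟩ := hUsurj t w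
    rw [hUU, hUiso]
  have hπ : ∀ w, ‖(ContinuousLinearMap.adjoint ℓ) w‖ ≤ ‖w‖ := by
    intro w
    have h1 : ‖ContinuousLinearMap.adjoint ℓ‖ ≤ 1 := by
      rw [LinearIsometryEquiv.norm_map]
      exact ContinuousLinearMap.opNorm_le_bound _ zero_le_one (fun x => by rw [hℓ, one_mul])
    simpa using ContinuousLinearMap.le_of_opNorm_le _ h1 w
  have hbn : ∀ i, ‖(b t v ω) (e i)‖₊ =
      ‖(σ t ((ContinuousLinearMap.adjoint ℓ) (U t v)) ω) (e i)‖₊ := by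
    intro i
    apply NNReal.eq
    rw [hb]
    simp only [coe_nnnorm, ContinuousLinearMap.comp_apply]
    rw [hUn, hℓ]
  have hin : ⟪a t v ω, v⟫ = ⟪α t ((ContinuousLinearMap.adjoint ℓ) (U t v)) ω,
      (ContinuousLinearMap.adjoint ℓ) (U t v)⟫ := by
    rw [ha, ContinuousLinearMap.adjoint_inner_left, ContinuousLinearMap.adjoint_inner_right]
  simp only [hbn, hin]
  refine (hcoer _ t ht ω).trans ?_
  rw [EReal.coe_le_coe_iff]
  have h2 : ‖(ContinuousLinearMap.adjoint ℓ) (U t v)‖ ≤ ‖v‖ := (hπ _).trans (hUiso t v).le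
  have h3 : 0 ≤ C₀ - θ := sub_nonneg.2 hC₀θ
  gcongr
end

section
/- Let U, H and ℋ be real Hilbert spaces with U separable, ℓ : H → ℋ a linear isometry with adjoint π := ℓ*, and (U_t)_{t ∈ ℝ} a one-parameter group of unitary operators on ℋ. Fix T > 0, a set Ω, an orthonormal basis (e_i)_{i ∈ I} of U, maps α : [0,T] × H × Ω → H and σ : [0,T] × H × Ω → L(U,H), a function f : [0,T] × Ω → [0,∞), a monotone nondecreasing function τ : [0,∞) → [0,∞), and constants β ≥ 0, C₀ ≥ θ > 0, C ≥ 0. Define a(t,v,ω) := (U_t)*( ℓ( α(t, π(U_t v), ω) ) ) and b(t,v,ω) := (U_t)* ∘ ℓ ∘ σ(t, π(U_t v), ω). Suppose that α and σ satisfy, for all x, y, z ∈ H and (t,ω): (H1) λ ↦ ⟨α(t, x + λ y, ω), z⟩_H is continuous on ℝ; (H2') 2⟨α(t,x,ω) − α(t,y,ω), x − y⟩_H + ∑_i ‖(σ(t,x,ω) − σ(t,y,ω)) e_i‖_H² ≤ (f(t,ω) + τ(‖y‖_H)) ‖x − y‖_H²; (H3) 2⟨α(t,y,ω), y⟩_H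 + ∑_i ‖σ(t,y,ω) e_i‖_H² ≤ (C₀ − θ) ‖y‖_H² + f(t,ω); (H4') ‖α(t,y,ω)‖_H² ≤ (f(t,ω) + C₀ ‖y‖_H²)(1 + ‖y‖_H^β); and the bound ∑_i ‖σ(t,y,ω) e_i‖_H² ≤ C (f(t,ω) + ‖y‖_H²). Then a and b satisfy the same five conditions on ℋ with the same f, τ, β, C₀, θ and C: for all u, v, w ∈ ℋ and (t,ω), λ ↦ ⟨a(t, u + λ v, ω), w⟩_ℋ is continuous on ℝ; 2⟨a(t,u,ω) − a(t,v,ω), u − v⟩_ℋ + ∑_i ‖(b(t,u,ω) − b(t,v,ω)) e_i‖_ℋ² ≤ (f(t,ω) + τ(‖v‖_ℋ)) ‖u − v‖_ℋ²; 2⟨a(t,v,ω), v⟩_ℋ + ∑_i ‖b(t,v,ω) e_i‖_ℋ² ≤ (C₀ − θ) ‖v‖_ℋ² + f(t,ω); ‖a(t,v,ω)‖_ℋ² ≤ (f(t,ω) + C₀ ‖v‖_ℋ²)(1 + ‖v‖_ℋ^β); and ∑_i ‖b(t,v,ω) e_i‖_ℋ² ≤ C (f(t,ω) + ‖v‖_ℋ²).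 -/
open scoped ENNReal RealInnerProductSpace

/-- The full reduction step in the proof of Theorem 2.4: if the coefficients `(α, σ)`
on `H` satisfy hemicontinuity (H1), local monotonicity (H2'), coercivity (H3), the
growth condition (H4') and the linear growth bound on `σ`, then the transferred
coefficients `a(t,v,ω) = (U_t)* (ℓ (α(t, π (U_t v), ω)))` and
`b(t,v,ω) = (U_t)* ∘ ℓ ∘ σ(t, π (U_t v), ω)` on the dilated space `𝓗` satisfy the
same five conditions with the same `f, τ, β, C₀, θ, C`; here `π = ℓ*` and the squared
Hilbert–Schmidt norm is `∑' i, ‖· (e i)‖² ∈ [0,∞]` for an orthonormal basis `e` of the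
separable Hilbert space `E`. -/
theorem coefficient_conditions_transfer
    {E H 𝓗 : Type*}
    [NormedAddCommGroup E] [InnerProductSpace ℝ E] [CompleteSpace E]
    [TopologicalSpace.SeparableSpace E]
    [NormedAddCommGroup H] [InnerProductSpace ℝ H] [CompleteSpace H]
    [NormedAddCommGroup 𝓗] [InnerProductSpace ℝ 𝓗] [CompleteSpace 𝓗]
    (ℓ : H →L[ℝ] 𝓗) (hℓ : ∀ x : H, ‖ℓ x‖ = ‖x‖)
    (U : ℝ → 𝓗 →L[ℝ] 𝓗)
    (hU0 : U 0 = 1)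
    (hUadd : ∀ s t : ℝ, U (s + t) = (U s).comp (U t))
    (hUiso : ∀ (t : ℝ) (x : 𝓗), ‖U t x‖ = ‖x‖)
    (hUsurj : ∀ t : ℝ, Function.Surjective (U t))
    (T : ℝ) (hT : 0 < T) (Ω : Type*)
    {ι : Type*} (e : HilbertBasis ι ℝ E)
    (α : ℝ → H → Ω → H) (σ : ℝ → H → Ω → (E →L[ℝ] H))
    (f : ℝ → Ω → ℝ) (hf : ∀ t ω, 0 ≤ f t ω)
    (τ : ℝ → ℝ) (hτ0 : ∀ r, 0 ≤ r → 0 ≤ τ r) (hτmono : MonotoneOn τ (Set.Ici (0 : ℝ)))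
    (β C₀ θ C : ℝ) (hβ : 0 ≤ β) (hθ : 0 < θ) (hC₀θ : θ ≤ C₀) (hC : 0 ≤ C)
    (a : ℝ → 𝓗 → Ω → 𝓗)
    (ha : ∀ (t : ℝ) (v : 𝓗) (ω : Ω),
      a t v ω = (ContinuousLinearMap.adjoint (U t))
        (ℓ (α t ((ContinuousLinearMap.adjoint ℓ) (U t v)) ω)))
    (b : ℝ → 𝓗 → Ω → (E →L[ℝ] 𝓗))
    (hb : ∀ (t : ℝ) (v : 𝓗) (ω : Ω),
      b t v ω = ((ContinuousLinearMap.adjoint (U t)).comp ℓ).comp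
        (σ t ((ContinuousLinearMap.adjoint ℓ) (U t v)) ω))
    -- (H1) hemicontinuity of α
    (hH1 : ∀ (x y z : H), ∀ t ∈ Set.Icc (0 : ℝ) T, ∀ ω : Ω,
      Continuous fun lam : ℝ => ⟪α t (x + lam • y) ω, z⟫)
    -- (H2') local monotonicity of (α, σ)
    (hH2 : ∀ (x y : H), ∀ t ∈ Set.Icc (0 : ℝ) T, ∀ ω : Ω,
      ((2 * ⟪α t x ω - α t y ω, x - y⟫ : ℝ) : EReal) +
          (∑' i, ((‖(σ t x ω - σ t y ω) (e i)‖₊ : ℝ≥0∞) ^ 2) : ℝ≥0∞) ≤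
        (((f t ω + τ ‖y‖) * ‖x - y‖ ^ 2 : ℝ) : EReal))
    -- (H3) coercivity of (α, σ)
    (hH3 : ∀ (y : H), ∀ t ∈ Set.Icc (0 : ℝ) T, ∀ ω : Ω,
      ((2 * ⟪α t y ω, y⟫ : ℝ) : EReal) +
          (∑' i, ((‖(σ t y ω) (e i)‖₊ : ℝ≥0∞) ^ 2) : ℝ≥0∞) ≤
        (((C₀ - θ) * ‖y‖ ^ 2 + f t ω : ℝ) : EReal))
    -- (H4') growth of α
    (hH4 : ∀ (y : H), ∀ t ∈ Set.Icc (0 : ℝ) T, ∀ ω : Ω,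
      ‖α t y ω‖ ^ 2 ≤ (f t ω + C₀ * ‖y‖ ^ 2) * (1 + ‖y‖ ^ β))
    -- linear growth bound on σ
    (hσ : ∀ (y : H), ∀ t ∈ Set.Icc (0 : ℝ) T, ∀ ω : Ω,
      (∑' i, ((‖(σ t y ω) (e i)‖₊ : ℝ≥0∞) ^ 2) : ℝ≥0∞) ≤
        ENNReal.ofReal (C * (f t ω + ‖y‖ ^ 2))) :
    -- (H1) hemicontinuity of a
    (∀ (u v w : 𝓗), ∀ t ∈ Set.Icc (0 : ℝ) T, ∀ ω : Ω,
      Continuous fun lam : ℝ => ⟪a t (u + lam • v) ω, w⟫) ∧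
    -- (H2') local monotonicity of (a, b)
    (∀ (u v : 𝓗), ∀ t ∈ Set.Icc (0 : ℝ) T, ∀ ω : Ω,
      ((2 * ⟪a t u ω - a t v ω, u - v⟫ : ℝ) : EReal) +
          (∑' i, ((‖(b t u ω - b t v ω) (e i)‖₊ : ℝ≥0∞) ^ 2) : ℝ≥0∞) ≤
        (((f t ω + τ ‖v‖) * ‖u - v‖ ^ 2 : ℝ) : EReal)) ∧
    -- (H3) coercivity of (a, b)
    (∀ (v : 𝓗), ∀ t ∈ Set.Icc (0 : ℝ) T, ∀ ω : Ω,
      ((2 * ⟪a t v ω, v⟫ : ℝ) : EReal) +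
          (∑' i, ((‖(b t v ω) (e i)‖₊ : ℝ≥0∞) ^ 2) : ℝ≥0∞) ≤
        (((C₀ - θ) * ‖v‖ ^ 2 + f t ω : ℝ) : EReal)) ∧
    -- (H4') growth of a
    (∀ (v : 𝓗), ∀ t ∈ Set.Icc (0 : ℝ) T, ∀ ω : Ω,
      ‖a t v ω‖ ^ 2 ≤ (f t ω + C₀ * ‖v‖ ^ 2) * (1 + ‖v‖ ^ β)) ∧
    -- linear growth bound on b
    (∀ (v : 𝓗), ∀ t ∈ Set.Icc (0 : ℝ) T, ∀ ω : Ω,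
      (∑' i, ((‖(b t v ω) (e i)‖₊ : ℝ≥0∞) ^ 2) : ℝ≥0∞) ≤
        ENNReal.ofReal (C * (f t ω + ‖v‖ ^ 2))) := by
  have hUU : ∀ (t : ℝ) (x : 𝓗), ContinuousLinearMap.adjoint (U t) (U t x) = x := by
    intro t x
    have h := (ContinuousLinearMap.norm_map_iff_adjoint_comp_self (U t)).1 (hUiso t)
    exact congrArg (fun A : 𝓗 →L[ℝ] 𝓗 => A x) h
  have hUn : ∀ (t : ℝ) (x : 𝓗), ‖ContinuousLinearMap.adjoint (U t) x‖ = ‖x‖ := by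
    intro t x
    obtain ⟨y, rfl⟩ := hUsurj t x
    rw [hUU, hUiso]
  have hπn : ∀ x : 𝓗, ‖ContinuousLinearMap.adjoint ℓ x‖ ≤ ‖x‖ := by
    intro x
    have h1 : ‖ContinuousLinearMap.adjoint ℓ‖ ≤ 1 := by
      rw [LinearIsometryEquiv.norm_map]
      exact ContinuousLinearMap.opNorm_le_bound _ zero_le_one (fun x => by rw [hℓ, one_mul])
    simpa using ContinuousLinearMap.le_of_opNorm_le _ h1 x
  have hPn : ∀ (t : ℝ) (x : 𝓗), ‖ContinuousLinearMap.adjoint ℓ (U t x)‖ ≤ ‖x‖ := by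
    intro t x
    exact (hπn _).trans (hUiso t x).le
  have hin : ∀ (t : ℝ) (x : H) (w : 𝓗), ⟪ContinuousLinearMap.adjoint (U t) (ℓ x), w⟫
      = ⟪x, ContinuousLinearMap.adjoint ℓ (U t w)⟫ := by
    intro t x w
    rw [ContinuousLinearMap.adjoint_inner_left, ContinuousLinearMap.adjoint_inner_right]
  have hnn : ∀ (t : ℝ) (x : H), ‖ContinuousLinearMap.adjoint (U t) (ℓ x)‖₊ = ‖x‖₊ := by
    intro t x
    ext
    simp only [coe_nnnorm]
    rw [hUn, hℓ]
  have hbn : ∀ t v ω x, ‖b t v ω x‖₊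
      = ‖σ t (ContinuousLinearMap.adjoint ℓ (U t v)) ω x‖₊ := by
    intro t v ω x
    rw [hb]
    exact hnn _ _
  have hbd : ∀ t u v ω x, ‖(b t u ω - b t v ω) x‖₊
      = ‖(σ t (ContinuousLinearMap.adjoint ℓ (U t u)) ω
          - σ t (ContinuousLinearMap.adjoint ℓ (U t v)) ω) x‖₊ := by
    intro t u v ω x
    rw [hb, hb, ← ContinuousLinearMap.comp_sub]
    exact hnn _ _
  refine ⟨?_, ?_, ?_, ?_, ?_⟩
  · intro u v w t ht ω
    simp only [ha, hin, map_add, map_smul]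
    exact hH1 _ _ _ t ht ω
  · intro u v t ht ω
    simp only [hbd]
    have h := hH2 (ContinuousLinearMap.adjoint ℓ (U t u))
      (ContinuousLinearMap.adjoint ℓ (U t v)) t ht ω
    rw [ha, ha, ← map_sub, ← map_sub, hin, map_sub, map_sub]
    refine h.trans (EReal.coe_le_coe_iff.2 ?_)
    rw [← map_sub, ← map_sub]
    have h1 := hPn t v
    have h2 := hPn t (u - v)
    have h3 := hτmono (Set.mem_Ici.2 (norm_nonneg _)) (Set.mem_Ici.2 (norm_nonneg _)) h1
    have h4 := hf t ω
    have h5 := hτ0 ‖v‖ (norm_nonneg _)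
    gcongr
  · intro v t ht ω
    simp only [hbn]
    have h := hH3 (ContinuousLinearMap.adjoint ℓ (U t v)) t ht ω
    rw [ha, hin]
    refine h.trans (EReal.coe_le_coe_iff.2 ?_)
    have h1 := hPn t v
    have h2 : 0 ≤ C₀ - θ := sub_nonneg.2 hC₀θ
    gcongr
  · intro v t ht ω
    have h := hH4 (ContinuousLinearMap.adjoint ℓ (U t v)) t ht ω
    rw [ha, hUn, hℓ]
    refine h.trans ?_
    have h1 := hPn t v
    have h2 : 0 ≤ C₀ := hθ.le.trans hC₀θ
    have h4 := hf t ω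
    gcongr
  · intro v t ht ω
    simp only [hbn]
    refine (hσ _ t ht ω).trans (ENNReal.ofReal_le_ofReal ?_)
    have h1 := hPn t v
    gcongr
end
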